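/- arXiv:2403.15259 — 2 statements merged into one kernel-verified Lean document; each statement's English description precedes it below -/
import Mathlib

section
/- Let E be an ordered Polish space with the property (BMC) that every increasing sequence x₁ ⪯ x₂ ⪯ … in E that is bounded above by some y ∈ E converges in E. Then the analogous property holds for probability measures: if μ₁ ⪯ μ₂ ⪯ … is a sequence of Borel probability measures on E, increasing in stochastic order and bounded above in stochastic order by a probability measure λ, then there exists a probability measure μ to which the sequence converges weakly. -/
open MeasureTheory ProbabilityTheory Filter Topology

/-- `μ` is *stochastically smaller* than `ν` (written `μ ⪯ ν` in the paper):
`μ I ≤ ν I` for every Borel increasing (upper) set `I`. -/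
def StochDom {E : Type*} [MeasurableSpace E] [Preorder E] (μ ν : Measure E) : Prop :=
  ∀ I : Set E, MeasurableSet I → IsUpperSet I → μ I ≤ ν I

/-- A Markov kernel `P` is *(stochastically) monotone* if for every bounded monotone
measurable `g : E → [0,1]` the map `x ↦ ∫ g dP(x)` is again monotone. -/
def MonotoneKernel {E : Type*} [MeasurableSpace E] [Preorder E] (P : Kernel E E) : Prop :=
  ∀ g : E → ℝ, Measurable g → Monotone g → (∀ x, g x ∈ Set.Icc (0 : ℝ) 1) →
    Monotone fun x => ∫ y, g y ∂(P x)

/-- The `n`-step transition kernel `P⁽ⁿ⁾` of a Markov kernel `P`;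
`kpow P n x` is the law of `Xₙˣ`, the chain with kernel `P` started at `x`. -/
noncomputable def kpow {E : Type*} [MeasurableSpace E] (P : Kernel E E) : ℕ → Kernel E E
  | 0 => Kernel.id
  | n + 1 => P.comp (kpow P n)

/-- The process `Z` on `(Ω, μ)` is a (possibly time-inhomogeneous) Markov chain with
one-step kernels `Q n`, expressed through finite-dimensional distributions: for every
bounded measurable cylinder functional `φ` of the past and every Borel set `A`,
`E[φ(Z₀,…,Zₙ) · 1_A(Z_{n+1})] = E[φ(Z₀,…,Zₙ) · (Q n)(Zₙ, A)]`. -/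
def MCStep {Ω S : Type*} [MeasurableSpace Ω] [MeasurableSpace S]
    (μ : Measure Ω) (Q : ℕ → Kernel S S) (Z : ℕ → Ω → S) : Prop :=
  ∀ (n : ℕ) (A : Set S), MeasurableSet A →
    ∀ φ : (Fin (n + 1) → S) → ℝ, Measurable φ → (∀ v, φ v ∈ Set.Icc (0 : ℝ) 1) →
      ∫ ω, φ (fun i => Z i.1 ω) * A.indicator (fun _ => (1 : ℝ)) (Z (n + 1) ω) ∂μ
        = ∫ ω, φ (fun i => Z i.1 ω) * ((Q n) (Z n ω) A).toReal ∂μ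

/-- `X` on `(Ω, μ)` is a time-homogeneous Markov chain with kernel `P` started at `x`. -/
def IsMChain {E Ω : Type*} [MeasurableSpace E] [MeasurableSpace Ω]
    (P : Kernel E E) (x : E) (μ : Measure Ω) (X : ℕ → Ω → E) : Prop :=
  IsProbabilityMeasure μ ∧ (∀ n, Measurable (X n)) ∧ (∀ᵐ ω ∂μ, X 0 ω = x) ∧
    MCStep μ (fun _ => P) X

/-- A *Markovian coupling* of two chains with kernel `P` started at `x` and `y`:
both coordinates are Markov chains with kernel `P` and the pair process is itself a
(possibly time-inhomogeneous) Markov chain. -/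
def IsMarkovianCoupling {E Ω : Type*} [MeasurableSpace E] [MeasurableSpace Ω]
    (P : Kernel E E) (x y : E) (μ : Measure Ω) (X Y : ℕ → Ω → E) : Prop :=
  IsMChain P x μ X ∧ IsMChain P y μ Y ∧
    ∃ Q : ℕ → Kernel (E × E) (E × E), (∀ n, IsMarkovKernel (Q n)) ∧
      MCStep μ Q fun n ω => (X n ω, Y n ω)

/-- A set `H ⊆ E × E` is *achievable* for the kernel `P` if for all `x, y` there is a
Markovian coupling of the chains started at `x` and `y` whose hitting time of `H`
is finite almost surely. -/
def Achievable {E : Type*} [MeasurableSpace E] (P : Kernel E E) (H : Set (E × E)) : Prop :=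
  ∀ x y : E, ∃ (Ω : Type) (_ : MeasurableSpace Ω) (μ : Measure Ω) (X Y : ℕ → Ω → E),
    IsMarkovianCoupling P x y μ X Y ∧ ∀ᵐ ω ∂μ, ∃ n, (X n ω, Y n ω) ∈ H

/-- Condition (BMC): every increasing sequence bounded above by some element converges. -/
def BMC (E : Type*) [Preorder E] [TopologicalSpace E] : Prop :=
  ∀ (x : ℕ → E) (y : E), Monotone x → (∀ n, x n ≤ y) → ∃ l, Tendsto x atTop (nhds l)

/-- The ordered metric space `E` is *normal*: there is a continuous `h : [0,∞) → [0,∞)`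
with `h 0 = 0` such that `x ⪯ y ⪯ z` implies `d(x,y) ≤ h (d(x,z))`. -/
def NormalOrdered (E : Type*) [PseudoMetricSpace E] [Preorder E] : Prop :=
  ∃ h : ℝ → ℝ, ContinuousOn h (Set.Ici 0) ∧ h 0 = 0 ∧ (∀ t ≥ (0 : ℝ), 0 ≤ h t) ∧
    ∀ x y z : E, x ≤ y → y ≤ z → dist x y ≤ h (dist x z)

/-- Condition (PR): there are `x₀ ⪯ y₀` such that the hitting times
`ν⁻ = min {n ≥ 1 : Xₙ^{x₀} ⪰ x₀}` and `ν⁺ = min {n ≥ 1 : Xₙ^{y₀} ⪯ y₀}`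
have finite expectations. -/
def PRCond {E : Type*} [MeasurableSpace E] [Preorder E] (P : Kernel E E) : Prop :=
  ∃ x₀ y₀ : E, x₀ ≤ y₀ ∧
    (∃ (Ω : Type) (_ : MeasurableSpace Ω) (μ : Measure Ω) (X : ℕ → Ω → E),
      IsMChain P x₀ μ X ∧ (∀ᵐ ω ∂μ, ∃ n, 1 ≤ n ∧ x₀ ≤ X n ω) ∧
      Integrable (fun ω => ((sInf {n : ℕ | 1 ≤ n ∧ x₀ ≤ X n ω} : ℕ) : ℝ)) μ) ∧
    (∃ (Ω : Type) (_ : MeasurableSpace Ω) (μ : Measure Ω) (X : ℕ → Ω → E),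
      IsMChain P y₀ μ X ∧ (∀ᵐ ω ∂μ, ∃ n, 1 ≤ n ∧ X n ω ≤ y₀) ∧
      Integrable (fun ω => ((sInf {n : ℕ | 1 ≤ n ∧ X n ω ≤ y₀} : ℕ) : ℝ)) μ)

/-!
By Strassen's theorem, consecutive measures `μₙ ⪯ μₙ₊₁` have a coupling carried by `{x ≤ y}`.
Gluing these couplings as the transitions of a Markov chain gives an almost surely increasing
process `Xₙ` with laws `μₙ`, so it suffices that `Xₙ` converges almost surely. Let `K` be a compact
set of increasing divergent paths and `Fₙ` the upper closure of its projection to time `n`. If `z`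
were in every `Fₙ`, then for each `n` some path in `K` would stay below `z` up to time `n`, and by
compactness some path in `K` would stay below `z` forever, contradicting (BMC). So the closed
upper sets `Fₙ` decrease to `∅`, and `P(K) ≤ μₙ(Fₙ) ≤ λ(Fₙ) → 0`.

Strassen's theorem for a closed relation `R` follows from the finite one. Any finite family of boxes
disjoint from `R` induces finite partitions of the two factors, hence a coupling which does not
charge these boxes; the couplings of two given measures form a compact set, so some coupling
charges no open box disjoint from `R`. The finite case is Hahn–Banach separation.
-/

theorem integral_le_integral_of_measure_lt_le {X Y : Type*} [MeasurableSpace X]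
    [MeasurableSpace Y] {μ : Measure X} {ν : Measure Y} [IsProbabilityMeasure μ]
    [IsProbabilityMeasure ν] {f : X → ℝ} {g : Y → ℝ} (hf : Integrable f μ) (hg : Integrable g ν)
    (h : ∀ t, μ {x | t < f x} ≤ ν {y | t < g y}) : ∫ x, f x ∂μ ≤ ∫ y, g y ∂ν := by
  have upper : ∫⁻ x, .ofReal (max (f x) 0) ∂μ ≤ ∫⁻ y, .ofReal (max (g y) 0) ∂ν := by
    rw [lintegral_eq_lintegral_meas_lt (f := fun x ↦ max (f x) 0) μ
        (ae_of_all _ fun _ ↦ le_max_right _ _) hf.pos_part.aemeasurable,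
      lintegral_eq_lintegral_meas_lt (f := fun y ↦ max (g y) 0) ν
        (ae_of_all _ fun _ ↦ le_max_right _ _) hg.pos_part.aemeasurable]
    refine setLIntegral_mono' measurableSet_Ioi fun t (ht : 0 < t) ↦ ?_
    simpa only [lt_max_iff, ht.not_gt, or_false] using h t
  have lower : ∫⁻ y, .ofReal (max (-g y) 0) ∂ν ≤ ∫⁻ x, .ofReal (max (-f x) 0) ∂μ := by
    rw [lintegral_eq_lintegral_meas_le (f := fun x ↦ max (-f x) 0) μ
        (ae_of_all _ fun _ ↦ le_max_right _ _) hf.neg_part.aemeasurable,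
      lintegral_eq_lintegral_meas_le (f := fun y ↦ max (-g y) 0) ν
        (ae_of_all _ fun _ ↦ le_max_right _ _) hg.neg_part.aemeasurable]
    refine setLIntegral_mono' measurableSet_Ioi fun t (ht : 0 < t) ↦ ?_
    have le_max_neg_iff (s : ℝ) : t ≤ max (-s) 0 ↔ ¬-t < s := by simp [ht.not_ge, le_neg]
    simp only [le_max_neg_iff, ← Set.compl_ofPred]
    rw [prob_compl_eq_one_sub₀ (nullMeasurableSet_lt aemeasurable_const hg.aemeasurable),
      prob_compl_eq_one_sub₀ (nullMeasurableSet_lt aemeasurable_const hf.aemeasurable)]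
    exact tsub_le_tsub_left (h (-t)) 1
  rw [integral_eq_lintegral_pos_part_sub_lintegral_neg_part hf,
    integral_eq_lintegral_pos_part_sub_lintegral_neg_part hg]
  simp only [ENNReal.ofReal_max, ENNReal.ofReal_zero, zero_le, max_eq_left] at upper lower
  exact sub_le_sub (ENNReal.toReal_mono hg.lintegral_lt_top.ne upper)
    (ENNReal.toReal_mono hf.neg.lintegral_lt_top.ne lower)

/-- `π` is a *coupling* of `μ` and `ν`: a measure on the product with marginals `μ` and `ν`. -/
structure IsCoupling {X Y : Type*} [MeasurableSpace X] [MeasurableSpace Y]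
    (π : Measure (X × Y)) (μ : Measure X) (ν : Measure Y) : Prop where
  fst_eq : π.fst = μ
  snd_eq : π.snd = ν

theorem IsCoupling.isProbabilityMeasure {X Y : Type*} [MeasurableSpace X] [MeasurableSpace Y]
    {π : Measure (X × Y)} {μ : Measure X} {ν : Measure Y} [IsProbabilityMeasure μ]
    (hπ : IsCoupling π μ ν) : IsProbabilityMeasure π :=
  ⟨by rw [← Measure.fst_univ, hπ.fst_eq, measure_univ]⟩

section Finite

variable {ι κ : Type*}

/-- The incidence vectors `(e_i, e_j)`, for `(i, j) ∈ r`, of the edges of the bipartite graph `r`.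
Their convex hull consists of the pairs of marginals of probability measures carried by `r`. -/
def edgeVectors [DecidableEq ι] [DecidableEq κ] (r : SetRel ι κ) : Set ((ι → ℝ) × (κ → ℝ)) :=
  (fun p ↦ (Pi.single p.1 1, Pi.single p.2 1)) '' r

theorem exists_dual_of_notMem_convexHull_edgeVectors [Fintype ι] [Fintype κ] [DecidableEq ι]
    [DecidableEq κ] {r : SetRel ι κ} {a : ι → ℝ} {b : κ → ℝ}
    (h : (a, b) ∉ convexHull ℝ (edgeVectors r)) :
    ∃ (α : ι → ℝ) (β : κ → ℝ) (u : ℝ), (∀ i j, (i, j) ∈ r → α i + β j < u) ∧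
      u < ∑ i, a i * α i + ∑ j, b j * β j := by
  obtain ⟨L, u, hLr, hLx⟩ := geometric_hahn_banach_closed_point (convex_convexHull ℝ _)
    ((r.toFinite.image _).isClosed_convexHull ℝ) h
  have L_apply (a : ι → ℝ) (b : κ → ℝ) : L (a, b) =
      ∑ i, a i * L (Pi.single i 1, 0) + ∑ j, b j * L (0, Pi.single j 1) := by
    conv_lhs => rw [← L.comp_inl_add_comp_inr (a, b), pi_eq_sum_univ' a, pi_eq_sum_univ' b]
    simp only [map_sum, map_smul, ContinuousLinearMap.comp_apply, ContinuousLinearMap.inl_apply,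
      ContinuousLinearMap.inr_apply, smul_eq_mul]
  refine ⟨fun i ↦ L (Pi.single i 1, 0), fun j ↦ L (0, Pi.single j 1), u, fun i j hij ↦ ?_, ?_⟩
  · simpa [← map_add] using hLr _ (subset_convexHull ℝ _ ⟨(i, j), hij, rfl⟩)
  · rwa [← L_apply]

theorem sum_ofReal_smul_dirac_eq {T : Type*} [Fintype T] [Countable ι] [DecidableEq ι]
    [MeasurableSpace ι] [MeasurableSingletonClass ι] {μ : Measure ι} [IsFiniteMeasure μ]
    {w : T → ℝ} (hw : ∀ t, 0 ≤ w t) {k : T → ι}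
    (h : ∑ t, w t • Pi.single (k t) (1 : ℝ) = fun i ↦ μ.real {i}) :
    ∑ t, ENNReal.ofReal (w t) • Measure.dirac (k t) = μ := by
  refine Measure.ext_of_singleton fun i ↦ ?_
  have mass : ∑ t, (if i = k t then w t else 0) = μ.real {i} := by
    simpa [Pi.single_apply] using congrFun h i
  have term_nonneg (t : T) : 0 ≤ if i = k t then w t else 0 := by
    split_ifs <;> simp [hw]
  rw [← ofReal_measureReal (μ := μ), ← mass,
    ENNReal.ofReal_sum_of_nonneg fun t _ ↦ term_nonneg t, Measure.finsetSum_apply]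
  refine Finset.sum_congr rfl fun t _ ↦ ?_
  rcases eq_or_ne i (k t) with rfl | hi
  · simp
  · simp [hi, hi.symm]

variable [Finite ι] [Finite κ] [MeasurableSpace ι] [MeasurableSpace κ]
  [MeasurableSingletonClass ι] [MeasurableSingletonClass κ] {r : SetRel ι κ}
  {μ : Measure ι} {ν : Measure κ}

theorem exists_isCoupling_of_mem_convexHull_edgeVectors [DecidableEq ι] [DecidableEq κ]
    [IsFiniteMeasure μ] [IsFiniteMeasure ν]
    (h : (fun i ↦ μ.real {i}, fun j ↦ ν.real {j}) ∈ convexHull ℝ (edgeVectors r)) :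
    ∃ π, IsCoupling π μ ν ∧ ∀ᵐ p ∂π, p ∈ r := by
  obtain ⟨T, _, w, z, hw, -, hz, hsum⟩ := mem_convexHull_iff_exists_fintype.1 h
  choose p hpr hpz using hz
  obtain rfl : (fun t ↦ (Pi.single (p t).1 1, Pi.single (p t).2 1)) = z := funext hpz
  refine ⟨∑ t, ENNReal.ofReal (w t) • Measure.dirac (p t), ⟨?_, ?_⟩, ?_⟩
  · refine .trans ?_ (sum_ofReal_smul_dirac_eq hw (k := fun t ↦ (p t).1)
      (by simpa [Prod.fst_sum] using congrArg Prod.fst hsum))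
    simp [Measure.fst, Measure.map_finset_sum' measurable_fst.aemeasurable, Measure.map_dirac]
  · refine .trans ?_ (sum_ofReal_smul_dirac_eq hw (k := fun t ↦ (p t).2)
      (by simpa [Prod.snd_sum] using congrArg Prod.snd hsum))
    simp [Measure.snd, Measure.map_finset_sum' measurable_snd.aemeasurable, Measure.map_dirac]
  · rw [ae_iff]
    simp [hpr]

theorem exists_isCoupling_ae_mem_of_finite [IsProbabilityMeasure μ] [IsProbabilityMeasure ν]
    (h : ∀ S : Set ι, μ S ≤ ν (r.image S)) : ∃ π, IsCoupling π μ ν ∧ ∀ᵐ p ∂π, p ∈ r := by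
  classical
  have := Fintype.ofFinite ι
  have := Fintype.ofFinite κ
  refine exists_isCoupling_of_mem_convexHull_edgeVectors (not_not.1 fun hout ↦ ?_)
  obtain ⟨α, β, u, hr, hlt⟩ := exists_dual_of_notMem_convexHull_edgeVectors hout
  have superlevel (t : ℝ) : μ {i | t < α i} ≤ ν {j | t < u - β j} := by
    refine (h _).trans (measure_mono ?_)
    rintro j ⟨i, hi : t < α i, hij⟩
    exact hi.trans (lt_sub_iff_add_lt.2 (hr i j hij))
  have dual_le : ∫ i, α i ∂μ ≤ ∫ j, (u - β j) ∂ν :=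
    integral_le_integral_of_measure_lt_le .of_finite .of_finite superlevel
  rw [integral_sub .of_finite .of_finite, integral_const, probReal_univ] at dual_le
  simp only [integral_fintype .of_finite, smul_eq_mul, one_mul] at dual_le
  linarith

end Finite

section Lift

variable {X Y ι κ : Type*} [MeasurableSpace X] [MeasurableSpace Y] [MeasurableSpace ι]
  [MeasurableSpace κ]

theorem fst_parallelComp_comp {K : Kernel ι X} [IsSFiniteKernel K] {L : Kernel κ Y}
    [IsMarkovKernel L] {π : Measure (ι × κ)} : ((K ∥ₖ L) ∘ₘ π).fst = K ∘ₘ π.fst := by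
  have fst_kernel : (K ∥ₖ L).map Prod.fst = K ∘ₖ .deterministic Prod.fst measurable_fst := by
    ext1 p
    simp [Kernel.map_apply _ measurable_fst, Kernel.parallelComp_apply,
      Kernel.comp_deterministic_eq_comap, Measure.map_fst_prod]
  rw [Measure.fst, Measure.map_comp _ _ measurable_fst, fst_kernel, ← Measure.comp_assoc,
    Measure.deterministic_comp_eq_map, Measure.fst]

theorem snd_parallelComp_comp {K : Kernel ι X} [IsMarkovKernel K] {L : Kernel κ Y}
    [IsSFiniteKernel L] {π : Measure (ι × κ)} : ((K ∥ₖ L) ∘ₘ π).snd = L ∘ₘ π.snd := by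
  have snd_kernel : (K ∥ₖ L).map Prod.snd = L ∘ₖ .deterministic Prod.snd measurable_snd := by
    ext1 p
    simp [Kernel.map_apply _ measurable_snd, Kernel.parallelComp_apply,
      Kernel.comp_deterministic_eq_comap, Measure.map_snd_prod]
  rw [Measure.snd, Measure.map_comp _ _ measurable_snd, snd_kernel, ← Measure.comp_assoc,
    Measure.deterministic_comp_eq_map, Measure.snd]

theorem map_parallelComp_comp_eq {K : Kernel ι X} [IsSFiniteKernel K] {L : Kernel κ Y}
    [IsSFiniteKernel L] {c : X → ι} {d : Y → κ} (hc : Measurable c) (hd : Measurable d)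
    {π : Measure (ι × κ)} (hK : K.map c =ᵐ[π.fst] Kernel.id) (hL : L.map d =ᵐ[π.snd] Kernel.id) :
    ((K ∥ₖ L) ∘ₘ π).map (Prod.map c d) = π := by
  rw [Measure.map_comp _ _ (hc.prodMap hd)]
  conv_rhs => rw [← Measure.id_comp (μ := π)]
  refine Measure.comp_congr ?_
  filter_upwards [ae_of_ae_map measurable_fst.aemeasurable hK,
    ae_of_ae_map measurable_snd.aemeasurable hL] with p hp hq
  rw [Kernel.map_apply _ (hc.prodMap hd), Kernel.parallelComp_apply,
    ← Measure.map_prod_map _ _ hc hd, ← Kernel.map_apply _ hc, ← Kernel.map_apply _ hd, hp, hq]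
  simp only [Kernel.id_apply, Measure.dirac_prod_dirac]

variable [StandardBorelSpace X] [StandardBorelSpace Y] [StandardBorelSpace ι]
  [StandardBorelSpace κ]

theorem condDistrib_id_map_ae_eq_id [Nonempty X] [Nonempty ι] {μ : Measure X}
    [IsFiniteMeasure μ] {c : X → ι} (hc : Measurable c) :
    (condDistrib id c μ).map c =ᵐ[μ.map c] Kernel.id :=
  (condDistrib_comp c aemeasurable_id hc).symm.trans (condDistrib_self c)

theorem exists_isCoupling_map_eq {μ : Measure X} {ν : Measure Y} [IsProbabilityMeasure μ]
    [IsProbabilityMeasure ν] {c : X → ι} {d : Y → κ} (hc : Measurable c) (hd : Measurable d)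
    {π : Measure (ι × κ)} (hπ : IsCoupling π (μ.map c) (ν.map d)) :
    ∃ ρ, IsCoupling ρ μ ν ∧ ρ.map (Prod.map c d) = π := by
  have : Nonempty X := nonempty_of_isProbabilityMeasure μ
  have : Nonempty Y := nonempty_of_isProbabilityMeasure ν
  have : Nonempty ι := .map c inferInstance
  have : Nonempty κ := .map d inferInstance
  refine ⟨(condDistrib id c μ ∥ₖ condDistrib id d ν) ∘ₘ π, ⟨?_, ?_⟩, ?_⟩
  · rw [fst_parallelComp_comp, hπ.fst_eq, condDistrib_comp_map hc.aemeasurable aemeasurable_id,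
      Measure.map_id]
  · rw [snd_parallelComp_comp, hπ.snd_eq, condDistrib_comp_map hd.aemeasurable aemeasurable_id,
      Measure.map_id]
  · refine map_parallelComp_comp_eq hc hd ?_ ?_
    · exact hπ.fst_eq ▸ condDistrib_id_map_ae_eq_id hc
    · exact hπ.snd_eq ▸ condDistrib_id_map_ae_eq_id hd

end Lift

theorem exists_isCoupling_ae_map_mem_of_finite {X Y ι κ : Type*} [MeasurableSpace X]
    [StandardBorelSpace X] [MeasurableSpace Y] [StandardBorelSpace Y] [Finite ι] [Finite κ]
    [MeasurableSpace ι] [MeasurableSpace κ] [MeasurableSingletonClass ι]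
    [MeasurableSingletonClass κ] {μ : Measure X} {ν : Measure Y} [IsProbabilityMeasure μ]
    [IsProbabilityMeasure ν] {c : X → ι} {d : Y → κ} (hc : Measurable c) (hd : Measurable d)
    {r : SetRel ι κ} (h : ∀ S, μ (c ⁻¹' S) ≤ ν (d ⁻¹' r.image S)) :
    ∃ π, IsCoupling π μ ν ∧ ∀ᵐ p ∂π, (c p.1, d p.2) ∈ r := by
  have : IsProbabilityMeasure (μ.map c) := Measure.isProbabilityMeasure_map hc.aemeasurable
  have : IsProbabilityMeasure (ν.map d) := Measure.isProbabilityMeasure_map hd.aemeasurable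
  have image_le (S : Set ι) : μ.map c S ≤ ν.map d (r.image S) := by
    rw [Measure.map_apply hc S.toFinite.measurableSet,
      Measure.map_apply hd (Set.toFinite _).measurableSet]
    exact h S
  obtain ⟨π, hπ, hπr⟩ := exists_isCoupling_ae_mem_of_finite image_le
  obtain ⟨ρ, hρ, rfl⟩ := exists_isCoupling_map_eq hc hd hπ
  exact ⟨ρ, hρ, ae_of_ae_map (hc.prodMap hd).aemeasurable hπr⟩

theorem isClosed_setOf_measure_eq_zero {X : Type*} [TopologicalSpace X] [HasOuterApproxClosed X]
    [MeasurableSpace X] [OpensMeasurableSpace X] {U : Set X} (hU : IsOpen U) :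
    IsClosed {π : ProbabilityMeasure X | π.toMeasure U = 0} := by
  refine isClosed_iff_ultrafilter.2 fun π l hl hmem ↦ le_antisymm ?_ zero_le
  have null : ∀ᶠ ρ in l.toFilter, (id ρ : ProbabilityMeasure X).toMeasure U = 0 := hmem
  calc π.toMeasure U ≤ l.toFilter.liminf fun ρ ↦ (id ρ : ProbabilityMeasure X).toMeasure U :=
        ProbabilityMeasure.le_liminf_measure_open_of_tendsto hl hU
    _ = 0 := (liminf_congr null).trans (liminf_const 0)

theorem exists_isCoupling_prod_eq_zero {X Y ι : Type*} [TopologicalSpace X] [PolishSpace X]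
    [MeasurableSpace X] [BorelSpace X] [MeasurableSpace Y] [StandardBorelSpace Y]
    [Finite ι] {μ : Measure X} {ν : Measure Y} [IsProbabilityMeasure μ]
    [IsProbabilityMeasure ν] {R : SetRel X Y} (h : ∀ K, IsCompact K → μ K ≤ ν (R.image K))
    {A : ι → Set X} {B : ι → Set Y} (hA : ∀ i, MeasurableSet (A i)) (hB : ∀ i, MeasurableSet (B i))
    (hAB : ∀ i, Disjoint (A i ×ˢ B i) R) :
    ∃ π, IsCoupling π μ ν ∧ ∀ i, π (A i ×ˢ B i) = 0 := by
  let c (x : X) (i : ι) : Prop := x ∈ A i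
  let d (y : Y) (i : ι) : Prop := y ∈ B i
  have hc : Measurable c := measurable_pi_iff.2 fun i ↦ measurable_mem.2 (hA i)
  have hd : Measurable d := measurable_pi_iff.2 fun i ↦ measurable_mem.2 (hB i)
  let r : SetRel (ι → Prop) (ι → Prop) := Prod.map c d '' R
  have image_le (S : Set (ι → Prop)) : μ (c ⁻¹' S) ≤ ν (d ⁻¹' r.image S) := by
    rw [(innerRegular_isCompact_isClosed_measurableSet_of_finite μ).measure_eq_iSup
      (hc S.toFinite.measurableSet)]
    refine iSup₂_le fun K hKS ↦ iSup_le fun hK ↦ (h K hK.1).trans (measure_mono ?_)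
    rintro y ⟨x, hx, hxy⟩
    exact ⟨c x, hKS hx, (x, y), hxy, rfl⟩
  obtain ⟨π, hπ, hπr⟩ := exists_isCoupling_ae_map_mem_of_finite hc hd image_le
  refine ⟨π, hπ, fun i ↦ measure_mono_null ?_ hπr⟩
  rintro ⟨x, y⟩ ⟨hx, hy⟩ ⟨⟨x', y'⟩, hR, heq⟩
  have hx' : x' ∈ A i := (congrFun (congrArg Prod.fst heq) i).mpr hx
  have hy' : y' ∈ B i := (congrFun (congrArg Prod.snd heq) i).mpr hy
  exact (hAB i).notMem_of_mem_left (a := (x', y')) ⟨hx', hy'⟩ hR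

section Compactness

variable {X Y : Type*} [TopologicalSpace X] [MeasurableSpace X] [BorelSpace X]
  [TopologicalSpace Y] [MeasurableSpace Y] [BorelSpace Y]

theorem isClosed_setOf_isCoupling [HasOuterApproxClosed X] [HasOuterApproxClosed Y]
    [OpensMeasurableSpace (X × Y)] (μ : ProbabilityMeasure X) (ν : ProbabilityMeasure Y) :
    IsClosed {π : ProbabilityMeasure (X × Y) | IsCoupling π.toMeasure μ ν} := by
  have hfst : IsClosed {π : ProbabilityMeasure (X × Y) | π.map (f := Prod.fst) (by fun_prop) = μ} :=
    isClosed_eq (ProbabilityMeasure.continuous_map continuous_fst) continuous_const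
  have hsnd : IsClosed {π : ProbabilityMeasure (X × Y) | π.map (f := Prod.snd) (by fun_prop) = ν} :=
    isClosed_eq (ProbabilityMeasure.continuous_map continuous_snd) continuous_const
  convert hfst.inter hsnd using 1
  ext π
  exact ⟨fun h ↦ ⟨Subtype.ext h.fst_eq, Subtype.ext h.snd_eq⟩,
    fun h ↦ ⟨congrArg Subtype.val h.1, congrArg Subtype.val h.2⟩⟩

theorem isCompact_setOf_isCoupling [PolishSpace X] [PolishSpace Y] (μ : ProbabilityMeasure X)
    (ν : ProbabilityMeasure Y) :
    IsCompact {π : ProbabilityMeasure (X × Y) | IsCoupling π.toMeasure μ ν} := by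
  rw [← (isClosed_setOf_isCoupling μ ν).closure_eq]
  refine isCompact_closure_of_isTightMeasureSet (.prodMk ?_ ?_)
  · refine (isTightMeasureSet_singleton (μ := μ.toMeasure)).subset ?_
    rintro _ ⟨_, ⟨π, hπ, rfl⟩, rfl⟩
    exact hπ.fst_eq
  · refine (isTightMeasureSet_singleton (μ := ν.toMeasure)).subset ?_
    rintro _ ⟨_, ⟨π, hπ, rfl⟩, rfl⟩
    exact hπ.snd_eq

theorem exists_isCoupling_ae_mem_of_isClosed [PolishSpace X] [PolishSpace Y] {μ : Measure X}
    {ν : Measure Y} [IsProbabilityMeasure μ] [IsProbabilityMeasure ν] {R : SetRel X Y}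
    (hR : IsClosed R) (h : ∀ K, IsCompact K → μ K ≤ ν (R.image K)) :
    ∃ π, IsCoupling π μ ν ∧ ∀ᵐ p ∂π, p ∈ R := by
  let Box := {b : Set X × Set Y // IsOpen b.1 ∧ IsOpen b.2 ∧ Disjoint (b.1 ×ˢ b.2) R}
  obtain ⟨π, hπ, hbox⟩ := (isCompact_setOf_isCoupling ⟨μ, ‹_›⟩ ⟨ν, ‹_›⟩).inter_iInter_nonempty
    (fun b : Box ↦ {π | π.toMeasure (b.1.1 ×ˢ b.1.2) = 0})
    (fun b ↦ isClosed_setOf_measure_eq_zero (b.2.1.prod b.2.2.1)) fun s ↦ by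
      obtain ⟨π, hπ, hbox⟩ := exists_isCoupling_prod_eq_zero h
        (fun b : s ↦ b.1.2.1.measurableSet) (fun b : s ↦ b.1.2.2.1.measurableSet)
        fun b ↦ b.1.2.2.2
      exact ⟨⟨π, hπ.isProbabilityMeasure⟩, hπ, Set.mem_iInter₂.2 fun b hb ↦ hbox ⟨b, hb⟩⟩
  refine ⟨π, hπ, measure_null_of_locally_null _ fun p hp ↦ ?_⟩
  obtain ⟨U, V, hU, hV, hpU, hpV, hUV⟩ := isOpen_prod_iff.1 hR.isOpen_compl p.1 p.2 hp
  refine ⟨U ×ˢ V, mem_nhdsWithin_of_mem_nhds ((hU.prod hV).mem_nhds ⟨hpU, hpV⟩), ?_⟩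
  exact Set.mem_iInter.1 hbox ⟨(U, V), hU, hV, Set.disjoint_left.2 hUV⟩

end Compactness

theorem isClosed_upperClosure_of_isCompact {E : Type*} [TopologicalSpace E] [Preorder E]
    [OrderClosedTopology E] {K : Set E} (hK : IsCompact K) :
    IsClosed (upperClosure K : Set E) :=
  IsClosed.relImage_of_isCompact (s := {p : E × E | p.1 ≤ p.2})
    (isClosed_le continuous_fst continuous_snd) hK

theorem StochDom.exists_isCoupling_ae_le {E : Type*} [TopologicalSpace E] [PolishSpace E]
    [MeasurableSpace E] [BorelSpace E] [Preorder E] [OrderClosedTopology E] {μ ν : Measure E}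
    [IsProbabilityMeasure μ] [IsProbabilityMeasure ν] (h : StochDom μ ν) :
    ∃ π, IsCoupling π μ ν ∧ ∀ᵐ p ∂π, p.1 ≤ p.2 := by
  refine exists_isCoupling_ae_mem_of_isClosed (R := {p | p.1 ≤ p.2})
    (isClosed_le continuous_fst continuous_snd) fun K hK ↦ ?_
  exact (measure_mono subset_upperClosure).trans
    (h _ (isClosed_upperClosure_of_isCompact hK).measurableSet (upperClosure K).upper)

theorem map_compProd_comap {X Y Z : Type*} [MeasurableSpace X] [MeasurableSpace Y]
    [MeasurableSpace Z] {μ : Measure X} [SFinite μ] {κ : Kernel Y Z} [IsSFiniteKernel κ]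
    {f : X → Y} (hf : Measurable f) :
    (μ ⊗ₘ κ.comap f hf).map (Prod.map f id) = μ.map f ⊗ₘ κ := by
  have hprod : Measurable (Prod.map f (id : Z → Z)) := hf.prodMap measurable_id
  ext A hA
  rw [Measure.map_apply hprod hA, Measure.compProd_apply (hprod hA), Measure.compProd_apply hA,
    lintegral_map (Kernel.measurable_kernel_prodMk_left hA) hf]
  rfl

section Markov

variable {X : ℕ → Type*} [∀ n, MeasurableSpace (X n)]

/-- The law on trajectories of the time-inhomogeneous Markov chain with initial law `μ₀` and
transition kernel `Q n` from time `n` to time `n + 1`, obtained from the Ionescu-Tulcea theorem. -/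
noncomputable def markovMeasure (μ₀ : Measure (X 0)) (Q : ∀ n, Kernel (X n) (X (n + 1)))
    [∀ n, IsMarkovKernel (Q n)] : Measure (∀ n, X n) :=
  Kernel.trajMeasure μ₀ fun n ↦
    (Q n).comap (fun x ↦ x ⟨n, Finset.mem_Iic.2 le_rfl⟩) (measurable_pi_apply _)

variable {μ₀ : Measure (X 0)} {Q : ∀ n, Kernel (X n) (X (n + 1))}
  [∀ n, IsMarkovKernel (Q n)]

instance [IsProbabilityMeasure μ₀] : IsProbabilityMeasure (markovMeasure μ₀ Q) := by
  unfold markovMeasure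
  infer_instance

theorem markovMeasure_map_eval_zero : (markovMeasure μ₀ Q).map (Function.eval 0) = μ₀ := by
  have eval_zero_eq : (Function.eval 0 : (∀ n, X n) → X 0) =
      (fun x : ∀ i : Finset.Iic 0, X i ↦ x ⟨0, Finset.mem_Iic.2 le_rfl⟩) ∘
        Preorder.frestrictLe 0 := rfl
  rw [eval_zero_eq, ← Measure.map_map (by fun_prop) (by fun_prop), markovMeasure,
    Kernel.trajMeasure, Measure.map_comp _ _ (by fun_prop), Kernel.traj_map_frestrictLe,
    Kernel.partialTraj_self, Measure.id_comp]
  exact (Measure.map_map (measurable_pi_apply _) (MeasurableEquiv.measurable _)).trans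
    Measure.map_id

theorem markovMeasure_map_eval_succ [IsProbabilityMeasure μ₀] (n : ℕ) :
    (markovMeasure μ₀ Q).map (fun x ↦ (x n, x (n + 1))) =
      (markovMeasure μ₀ Q).map (Function.eval n) ⊗ₘ Q n := by
  let last (x : ∀ i : Finset.Iic n, X i) : X n := x ⟨n, Finset.mem_Iic.2 le_rfl⟩
  have hlast : Measurable last := measurable_pi_apply _
  calc (markovMeasure μ₀ Q).map (fun x ↦ (x n, x (n + 1)))
      = ((markovMeasure μ₀ Q).map fun x ↦ (Preorder.frestrictLe n x, x (n + 1))).map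
          (Prod.map last id) := by
        rw [Measure.map_map (hlast.prodMap measurable_id) (by fun_prop)]
        rfl
    _ = ((markovMeasure μ₀ Q).map (Preorder.frestrictLe n) ⊗ₘ (Q n).comap last hlast).map
          (Prod.map last id) := by
        rw [markovMeasure, ← Kernel.map_frestrictLe_trajMeasure_compProd_eq_map_trajMeasure]
    _ = (markovMeasure μ₀ Q).map (Function.eval n) ⊗ₘ Q n := by
        rw [map_compProd_comap, Measure.map_map hlast (by fun_prop)]
        rfl

end Markov

theorem exists_measure_pi_map_eq {X : ℕ → Type*} [∀ n, MeasurableSpace (X n)]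
    [∀ n, StandardBorelSpace (X n)] {μ : ∀ n, Measure (X n)} [∀ n, IsProbabilityMeasure (μ n)]
    {π : ∀ n, Measure (X n × X (n + 1))} (hπ : ∀ n, IsCoupling (π n) (μ n) (μ (n + 1))) :
    ∃ P : Measure (∀ n, X n), IsProbabilityMeasure P ∧
      (∀ n, P.map (Function.eval n) = μ n) ∧ ∀ n, P.map (fun x ↦ (x n, x (n + 1))) = π n := by
  have (n : ℕ) : Nonempty (X n) := nonempty_of_isProbabilityMeasure (μ n)
  have (n : ℕ) : IsProbabilityMeasure (π n) := (hπ n).isProbabilityMeasure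
  let P := markovMeasure (μ 0) fun n ↦ (π n).condKernel
  have pair_eq (n : ℕ) (h : P.map (Function.eval n) = μ n) :
      P.map (fun x ↦ (x n, x (n + 1))) = π n := by
    rw [markovMeasure_map_eval_succ, h, ← (hπ n).fst_eq, (π n).disintegrate (π n).condKernel]
  have marginal_eq (n : ℕ) : P.map (Function.eval n) = μ n := by
    induction n with
    | zero => exact markovMeasure_map_eval_zero
    | succ n ih =>
      rw [← (hπ n).snd_eq, ← pair_eq n ih, Measure.snd,
        Measure.map_map measurable_snd (by fun_prop)]
      rfl
  exact ⟨P, inferInstance, marginal_eq, fun n ↦ pair_eq n (marginal_eq n)⟩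

theorem BMC.iInter_upperClosure_eval_image_eq_empty {E : Type*} [TopologicalSpace E] [Preorder E]
    [ClosedIicTopology E] (hE : BMC E) {K : Set (ℕ → E)} (hK : IsCompact K)
    (hmono : ∀ x ∈ K, Monotone x) (hdiv : ∀ x ∈ K, ¬∃ l, Tendsto x atTop (𝓝 l)) :
    ⋂ n, (upperClosure (Function.eval n '' K) : Set E) = ∅ := by
  refine Set.eq_empty_of_forall_notMem fun z hz ↦ ?_
  let below (n : ℕ) : Set (ℕ → E) := {x | ∀ i ≤ n, x i ≤ z}
  have below_closed (n : ℕ) : IsClosed (below n) := by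
    simp only [below, Set.ofPred_forall]
    exact isClosed_biInter fun i _ ↦ isClosed_Iic.preimage (continuous_apply i)
  have below_antitone : Antitone below := fun m n hmn x hx i hi ↦ hx i (hi.trans hmn)
  have inter_empty : K ∩ ⋂ n, below n = ∅ := by
    refine Set.eq_empty_of_forall_notMem fun x ⟨hxK, hx⟩ ↦ hdiv x hxK ?_
    exact hE x z (hmono x hxK) fun n ↦ Set.mem_iInter.1 hx n n le_rfl
  obtain ⟨n, hn⟩ := hK.elim_directed_family_closed below below_closed inter_empty
    below_antitone.directed_ge
  obtain ⟨_, ⟨x, hxK, rfl⟩, hxz⟩ := Set.mem_iInter.1 hz n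
  exact hn.subset ⟨hxK, fun i hi ↦ (hmono x hxK hi).trans hxz⟩

theorem BMC.measure_eq_zero_of_isCompact {E : Type*} [TopologicalSpace E] [Preorder E]
    [OrderClosedTopology E] [MeasurableSpace E] [OpensMeasurableSpace E] (hE : BMC E)
    {P : Measure (ℕ → E)} {lam : Measure E} [IsFiniteMeasure lam]
    (hP : ∀ n, StochDom (P.map (Function.eval n)) lam) {K : Set (ℕ → E)} (hK : IsCompact K)
    (hmono : ∀ x ∈ K, Monotone x) (hdiv : ∀ x ∈ K, ¬∃ l, Tendsto x atTop (𝓝 l)) : P K = 0 := by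
  let F (n : ℕ) : Set E := upperClosure (Function.eval n '' K)
  have F_measurable (n : ℕ) : MeasurableSet (F n) :=
    (isClosed_upperClosure_of_isCompact (hK.image (continuous_apply n))).measurableSet
  have F_antitone : Antitone F := by
    rintro m n hmn y ⟨_, ⟨x, hx, rfl⟩, hy⟩
    exact ⟨x m, ⟨x, hx, rfl⟩, (hmono x hx hmn).trans hy⟩
  have measure_le (n : ℕ) : P K ≤ lam (F n) := calc
    P K ≤ P (Function.eval n ⁻¹' F n) :=
      measure_mono fun x hx ↦ subset_upperClosure (Set.mem_image_of_mem _ hx)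
    _ = P.map (Function.eval n) (F n) :=
      (Measure.map_apply (measurable_pi_apply n) (F_measurable n)).symm
    _ ≤ lam (F n) := hP n _ (F_measurable n) (upperClosure _).upper
  have lim : Tendsto (lam ∘ F) atTop (𝓝 0) := by
    rw [← measure_empty (μ := lam), ← hE.iInter_upperClosure_eval_image_eq_empty hK hmono hdiv]
    exact tendsto_measure_iInter_atTop (fun n ↦ (F_measurable n).nullMeasurableSet) F_antitone
      ⟨0, measure_ne_top _ _⟩
  exact le_antisymm (ge_of_tendsto' lim measure_le) zero_le

theorem BMC.ae_exists_tendsto {E : Type*} [TopologicalSpace E] [PolishSpace E]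
    [MeasurableSpace E] [BorelSpace E] [Preorder E] [OrderClosedTopology E] (hE : BMC E)
    {P : Measure (ℕ → E)} [IsFiniteMeasure P] {lam : Measure E} [IsFiniteMeasure lam]
    (hP : ∀ n, StochDom (P.map (Function.eval n)) lam) (hmono : ∀ᵐ x ∂P, Monotone x) :
    ∀ᵐ x ∂P, ∃ l, Tendsto x atTop (𝓝 l) := by
  let D : Set (ℕ → E) := {x | Monotone x} \ {x | ∃ l, Tendsto x atTop (𝓝 l)}
  have D_measurable : MeasurableSet D := isClosed_monotone.measurableSet.diff
    (measurableSet_exists_tendsto (f := fun n (x : ℕ → E) ↦ x n) fun n ↦ measurable_pi_apply n)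
  have D_null : P D = 0 := by
    rw [(innerRegular_isCompact_isClosed_measurableSet_of_finite P).measure_eq_iSup D_measurable]
    simp only [ENNReal.iSup_eq_zero]
    exact fun K hKD hK ↦ hE.measure_eq_zero_of_isCompact hP hK.1 (fun x hx ↦ (hKD hx).1)
      fun x hx ↦ (hKD hx).2
  filter_upwards [hmono, measure_eq_zero_iff_ae_notMem.1 D_null] with x hx hxD
  exact not_not.1 fun hdiv ↦ hxD ⟨hx, hdiv⟩

theorem exists_forall_tendsto_integral_map_of_ae_exists_tendsto {Ω E : Type*} [MeasurableSpace Ω]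
    [TopologicalSpace E] [TopologicalSpace.PseudoMetrizableSpace E] [MeasurableSpace E]
    [BorelSpace E] {P : Measure Ω} [IsProbabilityMeasure P] {X : ℕ → Ω → E}
    (hX : ∀ n, AEMeasurable (X n) P) (hlim : ∀ᵐ ω ∂P, ∃ l, Tendsto (X · ω) atTop (𝓝 l)) :
    ∃ μ : Measure E, IsProbabilityMeasure μ ∧ ∀ g : BoundedContinuousFunction E ℝ,
      Tendsto (fun n ↦ ∫ x, g x ∂(P.map (X n))) atTop (𝓝 (∫ x, g x ∂μ)) := by
  obtain ⟨Xlim, hXlim, hXX⟩ := measurable_limit_of_tendsto_metrizable_ae hX hlim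
  refine ⟨P.map Xlim, Measure.isProbabilityMeasure_map hXlim.aemeasurable, fun g ↦ ?_⟩
  have integral_eq {Z : Ω → E} (hZ : AEMeasurable Z P) : ∫ x, g x ∂(P.map Z) = ∫ ω, g (Z ω) ∂P :=
    integral_map hZ g.continuous.aestronglyMeasurable
  simp only [integral_eq (hX _), integral_eq hXlim.aemeasurable]
  refine tendsto_integral_of_dominated_convergence (fun _ ↦ ‖g‖) (fun n ↦ ?_) (integrable_const _)
    (fun n ↦ ae_of_all _ fun ω ↦ g.norm_coe_le_norm _) ?_
  · exact g.continuous.measurable.aestronglyMeasurable.comp_aemeasurable (hX n)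
  · filter_upwards [hXX] with ω hω using (g.continuous.tendsto _).comp hω

theorem stmt3_general {E : Type*} [TopologicalSpace E] [PolishSpace E] [MeasurableSpace E]
    [BorelSpace E] [Preorder E] [OrderClosedTopology E] (hE : BMC E) (μs : ℕ → Measure E)
    [∀ n, IsProbabilityMeasure (μs n)] (lam : Measure E) [IsFiniteMeasure lam]
    (hmono : ∀ n, StochDom (μs n) (μs (n + 1))) (hbdd : ∀ n, StochDom (μs n) lam) :
    ∃ μ : Measure E, IsProbabilityMeasure μ ∧ ∀ g : BoundedContinuousFunction E ℝ,
      Tendsto (fun n ↦ ∫ x, g x ∂(μs n)) atTop (𝓝 (∫ x, g x ∂μ)) := by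
  choose π hπ hπ_le using fun n ↦ (hmono n).exists_isCoupling_ae_le
  obtain ⟨P, _, hP, hP_pair⟩ := exists_measure_pi_map_eq hπ
  have ae_le_succ (n : ℕ) : ∀ᵐ x ∂P, x n ≤ x (n + 1) :=
    ae_of_ae_map (by fun_prop) ((hP_pair n).symm ▸ hπ_le n)
  have ae_monotone : ∀ᵐ x ∂P, Monotone x :=
    (ae_all_iff.2 ae_le_succ).mono fun _ ↦ monotone_nat_of_le_succ
  have ae_tendsto : ∀ᵐ x ∂P, ∃ l, Tendsto x atTop (𝓝 l) :=
    hE.ae_exists_tendsto (fun n ↦ (hP n).symm ▸ hbdd n) ae_monotone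
  simpa only [hP] using exists_forall_tendsto_integral_map_of_ae_exists_tendsto
    (fun n ↦ (measurable_pi_apply n).aemeasurable) ae_tendsto

/-- If `E` satisfies (BMC), then so does the space of probability measures:
any sequence of probability measures increasing in stochastic order and bounded above
in stochastic order by a probability measure `lam` converges weakly to some
probability measure `μ`. -/
theorem stmt3 {E : Type*} [MetricSpace E] [PolishSpace E] [MeasurableSpace E] [BorelSpace E]
    [PartialOrder E] [OrderClosedTopology E]
    (hbmc : BMC E)
    (μs : ℕ → Measure E) [∀ n, IsProbabilityMeasure (μs n)]
    (lam : Measure E) [IsProbabilityMeasure lam]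
    (hmono : ∀ n, StochDom (μs n) (μs (n + 1)))
    (hbdd : ∀ n, StochDom (μs n) lam) :
    ∃ μ : Measure E, IsProbabilityMeasure μ ∧
      ∀ g : BoundedContinuousFunction E ℝ,
        Tendsto (fun n => ∫ x, g x ∂(μs n)) atTop (nhds (∫ x, g x ∂μ)) :=
  stmt3_general hbmc μs lam hmono hbdd
end

section
/- Let E be an ordered Polish space and let π₁ and π₂ be two Borel probability measures on E such that π₁(I) = π₂(I) for every Borel increasing set I ⊆ E. Then π₁ = π₂. -/
open MeasureTheory ProbabilityTheory Filter Topology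

/-!
The Borel increasing sets form a π-system, so it suffices that they generate the Borel σ-algebra.
In a standard Borel space any countable family of Borel sets separating points generates the
σ-algebra, so it suffices to find countably many Borel increasing sets separating points. If
`¬ x ≤ y`, closedness of the order gives basic open sets `U ∋ x` and `V ∋ y` such that no point of
`U` lies below a point of `V`, and there are only countably many such pairs. The increasing hull of
`U` is merely analytic, but it is disjoint from the decreasing hull of `V`, and Lusin separation,
iterated, squeezes a Borel increasing set between the two.
-/

section StandardBorel

variable {α β γ : Type*} [mα : MeasurableSpace α] [MeasurableSpace β] [MeasurableSpace γ]

lemma measurablySeparable_image_image [StandardBorelSpace α] [StandardBorelSpace β]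
    [MeasurableSpace.CountablySeparated γ] {f : α → γ} {g : β → γ} (hf : Measurable f)
    (hg : Measurable g) {s : Set α} {t : Set β} (hs : MeasurableSet s) (ht : MeasurableSet t)
    (hd : Disjoint (f '' s) (g '' t)) : MeasurablySeparable (f '' s) (g '' t) := by
  obtain ⟨_, _, _, _⟩ := exists_opensMeasurableSpace_of_countablySeparated γ
  exact (hs.analyticSet_image hf).measurablySeparable (ht.analyticSet_image hg) hd

lemma generateFrom_eq_of_hasCountableSeparatingOn [StandardBorelSpace α]
    {C : Set (Set α)} (hC : ∀ s ∈ C, MeasurableSet s)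
    [hsep : HasCountableSeparatingOn α (· ∈ C) Set.univ] :
    MeasurableSpace.generateFrom C = mα := by
  have hle : MeasurableSpace.generateFrom C ≤ mα := MeasurableSpace.generateFrom_le hC
  have hcs : @MeasurableSpace.CountablySeparated α (MeasurableSpace.generateFrom C) :=
    @MeasurableSpace.CountablySeparated.mk α (MeasurableSpace.generateFrom C)
      (hsep.mono (fun _ ↦ MeasurableSpace.measurableSet_generateFrom) subset_rfl)
  -- Suslin's theorem, applied to the identity map onto the coarser σ-algebra.
  exact (@Measurable.map_measurableSpace_eq α α mα _ (MeasurableSpace.generateFrom C) hcs id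
    (measurable_id'' hle) Function.surjective_id).symm.trans MeasurableSpace.map_id

end StandardBorel

lemma isPiSystem_measurableSet_isUpperSet {α : Type*} [LE α] [MeasurableSpace α] :
    IsPiSystem {s : Set α | MeasurableSet s ∧ IsUpperSet s} :=
  fun _ hs _ ht _ ↦ ⟨hs.1.inter ht.1, hs.2.inter ht.2⟩

section Preorder

variable {α : Type*} [Preorder α]

section StandardBorel

variable [MeasurableSpace α] [StandardBorelSpace α]

lemma measurablySeparable_upperClosure_lowerClosure
    (hle : MeasurableSet {p : α × α | p.1 ≤ p.2}) {s t : Set α} (hs : MeasurableSet s)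
    (ht : MeasurableSet t) (hd : Disjoint (upperClosure s : Set α) t) :
    MeasurablySeparable (upperClosure s : Set α) (lowerClosure t : Set α) := by
  have hup : (upperClosure s : Set α) =
      Prod.snd '' ({p : α × α | p.1 ≤ p.2} ∩ Prod.fst ⁻¹' s) := by
    ext; simp [and_comm]
  have hlow : (lowerClosure t : Set α) =
      Prod.fst '' ({p : α × α | p.1 ≤ p.2} ∩ Prod.snd ⁻¹' t) := by
    ext; simp [and_comm]
  have hd' : Disjoint (upperClosure s : Set α) (lowerClosure t : Set α) :=
    (upperClosure s).upper.disjoint_lowerClosure_right.2 hd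
  rw [hup, hlow] at hd' ⊢
  exact measurablySeparable_image_image measurable_snd measurable_fst
    (hle.inter (measurable_fst hs)) (hle.inter (measurable_snd ht)) hd'

theorem exists_measurableSet_isUpperSet_superset_disjoint
    (hle : MeasurableSet {p : α × α | p.1 ≤ p.2}) {s t : Set α} (hs : MeasurableSet s)
    (ht : MeasurableSet t) (hd : Disjoint (upperClosure s : Set α) t) :
    ∃ u, MeasurableSet u ∧ IsUpperSet u ∧ s ⊆ u ∧ Disjoint u t := by
  have enlarge (c : Set α) (hc : MeasurableSet c ∧ Disjoint (upperClosure c : Set α) t) :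
      ∃ d, (MeasurableSet d ∧ Disjoint (upperClosure d : Set α) t) ∧
        (upperClosure c : Set α) ⊆ d := by
    obtain ⟨d, hcd, htd, hdm⟩ :=
      measurablySeparable_upperClosure_lowerClosure hle hc.1 ht hc.2
    have hdt : Disjoint (upperClosure d : Set α) (lowerClosure t) :=
      (lowerClosure t).lower.disjoint_upperClosure_left.2 htd.symm
    exact ⟨d, ⟨hdm, hdt.mono_right subset_lowerClosure⟩, hcd⟩
  choose! F hF hcF using enlarge
  have hiter (n : ℕ) : MeasurableSet (F^[n] s) ∧ Disjoint (upperClosure (F^[n] s) : Set α) t := by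
    induction n with
    | zero => exact ⟨hs, hd⟩
    | succ n ih => simpa only [Function.iterate_succ_apply'] using hF _ ih
  have hsucc (n : ℕ) : (upperClosure (F^[n] s) : Set α) ⊆ F^[n + 1] s := by
    simpa only [Function.iterate_succ_apply'] using hcF _ (hiter n)
  refine ⟨⋃ n, F^[n] s, .iUnion fun n ↦ (hiter n).1, ?_, Set.subset_iUnion (F^[·] s) 0,
    Set.disjoint_iUnion_left.2 fun n ↦ (hiter n).2.mono_left subset_upperClosure⟩
  intro x y hxy hx
  obtain ⟨n, hn⟩ := Set.mem_iUnion.1 hx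
  exact Set.mem_iUnion_of_mem (n + 1) (hsucc n (mem_upperClosure.2 ⟨x, hn, hxy⟩))

end StandardBorel

variable [TopologicalSpace α] [OrderClosedTopology α]

lemma exists_mem_basis_disjoint_upperClosure {B : Set (Set α)}
    (hB : TopologicalSpace.IsTopologicalBasis B) {x y : α} (hxy : ¬ x ≤ y) :
    ∃ u ∈ B, ∃ v ∈ B, x ∈ u ∧ y ∈ v ∧ Disjoint (upperClosure u : Set α) v := by
  have hopen : IsOpen {p : α × α | p.1 ≤ p.2}ᶜ := OrderClosedTopology.isClosed_le'.isOpen_compl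
  obtain ⟨_, ⟨u, hu, v, hv, rfl⟩, ⟨hxu, hyv⟩, huv⟩ :=
    (hB.prod hB).exists_subset_of_mem_open (show (x, y) ∈ _ from hxy) hopen
  refine ⟨u, hu, v, hv, hxu, hyv, Set.disjoint_left.2 fun b hb hbv ↦ ?_⟩
  obtain ⟨a, hau, hab⟩ := mem_upperClosure.1 hb
  exact huv (Set.mk_mem_prod hau hbv) hab

variable (α) in
theorem exists_countable_measurableSet_isUpperSet_le_iff [SecondCountableTopology α]
    [MeasurableSpace α] [OpensMeasurableSpace α] [StandardBorelSpace α] :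
    ∃ S : Set (Set α), S.Countable ∧ (∀ s ∈ S, MeasurableSet s ∧ IsUpperSet s) ∧
      ∀ x y, x ≤ y ↔ ∀ s ∈ S, x ∈ s → y ∈ s := by
  let B := TopologicalSpace.countableBasis α
  have hB : TopologicalSpace.IsTopologicalBasis B := TopologicalSpace.isBasis_countableBasis α
  let J := {p ∈ B ×ˢ B | Disjoint (upperClosure p.1 : Set α) p.2}
  have hJ : J.Countable :=
    ((TopologicalSpace.countable_countableBasis α).prod
      (TopologicalSpace.countable_countableBasis α)).mono (Set.sep_subset _ _)
  have hle : MeasurableSet {p : α × α | p.1 ≤ p.2} :=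
    OrderClosedTopology.isClosed_le'.measurableSet
  have hsep : ∀ p ∈ J, ∃ u, MeasurableSet u ∧ IsUpperSet u ∧ p.1 ⊆ u ∧ Disjoint u p.2 :=
    fun p hp ↦ exists_measurableSet_isUpperSet_superset_disjoint hle
      (hB.isOpen hp.1.1).measurableSet (hB.isOpen hp.1.2).measurableSet hp.2
  choose! I hI hIup hsub hdisj using hsep
  refine ⟨I '' J, hJ.image I, Set.forall_mem_image.2 fun p hp ↦ ⟨hI p hp, hIup p hp⟩,
    fun x y ↦ ⟨fun hxy ↦ Set.forall_mem_image.2 fun p hp ↦ hIup p hp hxy, fun h ↦ ?_⟩⟩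
  by_contra hxy
  obtain ⟨u, hu, v, hv, hxu, hyv, huv⟩ := exists_mem_basis_disjoint_upperClosure hB hxy
  have hp : (u, v) ∈ J := ⟨⟨hu, hv⟩, huv⟩
  exact Set.disjoint_left.1 (hdisj _ hp) (h _ (Set.mem_image_of_mem I hp) (hsub _ hp hxu)) hyv

end Preorder

section PartialOrder

variable {E : Type*} [TopologicalSpace E] [SecondCountableTopology E] [PartialOrder E]
  [OrderClosedTopology E] [mE : MeasurableSpace E] [OpensMeasurableSpace E] [StandardBorelSpace E]

theorem generateFrom_measurableSet_isUpperSet :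
    MeasurableSpace.generateFrom {s : Set E | MeasurableSet s ∧ IsUpperSet s} = mE := by
  obtain ⟨S, hS, hSup, hSle⟩ := exists_countable_measurableSet_isUpperSet_le_iff E
  have : HasCountableSeparatingOn E (· ∈ {s : Set E | MeasurableSet s ∧ IsUpperSet s}) Set.univ :=
    ⟨S, hS, hSup, fun x _ y _ h ↦ le_antisymm ((hSle x y).2 fun s hs ↦ (h s hs).1)
      ((hSle y x).2 fun s hs ↦ (h s hs).2)⟩
  exact generateFrom_eq_of_hasCountableSeparatingOn fun _ hs ↦ hs.1

theorem stmt5_general (π₁ π₂ : Measure E) [IsFiniteMeasure π₁]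
    (h : ∀ I : Set E, MeasurableSet I → IsUpperSet I → π₁ I = π₂ I) : π₁ = π₂ :=
  ext_of_generate_finite _ generateFrom_measurableSet_isUpperSet.symm
    isPiSystem_measurableSet_isUpperSet (fun I hI ↦ h I hI.1 hI.2)
    (h Set.univ .univ isUpperSet_univ)

end PartialOrder

/-- Lemma 2.8: two Borel probability measures on an ordered Polish space
which agree on all Borel increasing sets are equal. -/
theorem stmt5 {E : Type*} [MetricSpace E] [PolishSpace E] [MeasurableSpace E] [BorelSpace E]
    [PartialOrder E] [OrderClosedTopology E]
    (π₁ π₂ : Measure E) [IsProbabilityMeasure π₁] [IsProbabilityMeasure π₂]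
    (h : ∀ I : Set E, MeasurableSet I → IsUpperSet I → π₁ I = π₂ I) :
    π₁ = π₂ :=
  stmt5_general π₁ π₂ h
end
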